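/- Let s₁ = [i₁, j₁] and s₁' = [i₁', j₁'] be proper segments with s₁ ▷ s₁'. Then the set of pairs (s₂, s₂') of segments such that (s₁, s₂) and (s₁', s₂') are ladders and (s₁, s₂) ▷₁ (s₁', s₂') is finite with exactly (1/4)·(i₁ − i₁' − 1)·(j₁ − j₁' − 1)·(2h + i₁ + i₁' − 2j₁)·(j₁ + j₁' − 2i₁) elements. -/

import Mathlib

/-!
Given `s₁ ▷ s₁'`, put `s₂ = [x, y]` and `s₂' = [u, v]`. By transitivity, the conditions on
`(s₂, s₂')` amount to `i₁' < u < i₁`, `j₁ < y ≤ h + u` and `j₁' < v < j₁`, `i₁ < x ≤ v`. They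
constrain `(u, y)` and `(v, x)` separately, each to the lattice points of a trapezoid whose columns
grow by one, so the count is a product of two sums of arithmetic progressions.
-/

namespace SnakePaper

/-- `zle a b` : `b - a` is a nonnegative integer (the integrality order `a ≤ b`). -/
def zle (a b : ℚ) : Prop := ∃ n : ℤ, 0 ≤ n ∧ b - a = (n : ℚ)

/-- `zlt a b` : `b - a` is a positive integer (the integrality order `a < b`). -/
def zlt (a b : ℚ) : Prop := ∃ n : ℤ, 0 < n ∧ b - a = (n : ℚ)

/-- `s = (i, j)` is an `N`-segment: `2i ∈ ℤ`, `j - i ∈ ℤ` and `0 ≤ j - i ≤ N + 1`. -/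
def IsSeg (N : ℕ) (s : ℚ × ℚ) : Prop :=
  (∃ m : ℤ, 2 * s.1 = (m : ℚ)) ∧
  ∃ n : ℤ, s.2 - s.1 = (n : ℚ) ∧ 0 ≤ n ∧ (n : ℚ) ≤ (N : ℚ) + 1

/-- `s = (i, j)` is a proper `N`-segment: `2i ∈ ℤ`, `j - i ∈ ℤ` and `0 < j - i < N + 1`. -/
def IsProperSeg (N : ℕ) (s : ℚ × ℚ) : Prop :=
  (∃ m : ℤ, 2 * s.1 = (m : ℚ)) ∧
  ∃ n : ℤ, s.2 - s.1 = (n : ℚ) ∧ 0 < n ∧ (n : ℚ) < (N : ℚ) + 1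

/-- `supp [i,j] = j - i`. -/
def supp (s : ℚ × ℚ) : ℚ := s.2 - s.1

/-- `spar [i,j] = i + j`. -/
def spar (s : ℚ × ℚ) : ℚ := s.1 + s.2

/-- Right dual `s* = [j - h, i]`, where `h = N + 1`. -/
def dual (N : ℕ) (s : ℚ × ℚ) : ℚ × ℚ := (s.2 - ((N : ℚ) + 1), s.1)

/-- Left dual `*s = [j, i + h]`, where `h = N + 1`. -/
def ldual (N : ℕ) (s : ℚ × ℚ) : ℚ × ℚ := (s.2, s.1 + ((N : ℚ) + 1))

/-- `1 + s = [i + 1, j + 1]`. -/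
def shift (s : ℚ × ℚ) : ℚ × ℚ := (s.1 + 1, s.2 + 1)

/-- `Covers N s₂ s₁` : `s₂ ▷ s₁`, i.e. `i₁ < i₂ ≤ j₁ < j₂ ≤ h + i₁` (integrality order). -/
def Covers (N : ℕ) (s₂ s₁ : ℚ × ℚ) : Prop :=
  zlt s₁.1 s₂.1 ∧ zle s₂.1 s₁.2 ∧ zlt s₁.2 s₂.2 ∧ zle s₂.2 (((N : ℚ) + 1) + s₁.1)

/-- For `s₂ ▷ s₁`, the intersection `s₁ ∩ s₂ = [i₂, j₁]`. -/
def seginter (s₁ s₂ : ℚ × ℚ) : ℚ × ℚ := (s₂.1, s₁.2)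

/-- For `s₂ ▷ s₁`, the union `s₁ ∪ s₂ = [i₁, j₂]`. -/
def segunion (s₁ s₂ : ℚ × ℚ) : ℚ × ℚ := (s₁.1, s₂.2)

/-- `(s 0, …, s (l-1))` is a ladder of length `l`. -/
def IsLadder (N l : ℕ) (s : ℕ → ℚ × ℚ) : Prop :=
  (∀ k, k < l → IsSeg N (s k)) ∧
  ∀ k m, k < m → m < l → zlt (s k).1 (s m).1 ∧ zlt (s k).2 (s m).2

/-- `(s₁, s₂)` is a ladder of length 2. -/
def IsLadder2 (N : ℕ) (s₁ s₂ : ℚ × ℚ) : Prop :=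
  IsSeg N s₁ ∧ IsSeg N s₂ ∧ zlt s₁.1 s₂.1 ∧ zlt s₁.2 s₂.2

/-- Componentwise covering of two length-`l` tuples: `𝐬 ▷ 𝐬'`. -/
def CoversMulti (N l : ℕ) (s s' : ℕ → ℚ × ℚ) : Prop :=
  ∀ m, m < l → Covers N (s m) (s' m)

/-- `𝐬 ▷_p 𝐬'` for length-`l` tuples: `𝐬(0, l−k) ▷ 𝐬'(k, l)` for all `0 ≤ k ≤ p`. -/
def CoversP (N l p : ℕ) (s s' : ℕ → ℚ × ℚ) : Prop :=
  ∀ k, k ≤ p → ∀ m, m + k < l → Covers N (s m) (s' (m + k))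

/-- `p` is an MY path for the segment `s` (`h = N + 1`; only values on `{0, …, h}` matter). -/
def IsMYPath (N : ℕ) (s : ℚ × ℚ) (p : ℕ → ℤ) : Prop :=
  (∀ k, k < N + 1 → p (k + 1) = p k + 1 ∨ p (k + 1) = p k - 1) ∧
  (p 0 : ℚ) = 2 * s.2 ∧ (p (N + 1) : ℚ) = ((N : ℚ) + 1) + 2 * s.1

/-- `s_{p,k} = [(p(k) - k)/2, (p(k) + k)/2]`. -/
def pathSeg (p : ℕ → ℤ) (k : ℕ) : ℚ × ℚ :=
  (((p k : ℚ) - (k : ℚ)) / 2, ((p k : ℚ) + (k : ℚ)) / 2)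

/-- `c_p^-` : segments at the local maxima of `p` in `[1, N]`. -/
def cMinus (N : ℕ) (p : ℕ → ℤ) : Set (ℚ × ℚ) :=
  {t | ∃ k, 1 ≤ k ∧ k ≤ N ∧ t = pathSeg p k ∧ p (k - 1) = p k - 1 ∧ p (k + 1) = p k - 1}

/-- `c_p^+` : segments at the local minima of `p` in `[1, N]`. -/
def cPlus (N : ℕ) (p : ℕ → ℤ) : Set (ℚ × ℚ) :=
  {t | ∃ k, 1 ≤ k ∧ k ≤ N ∧ t = pathSeg p k ∧ p (k - 1) = p k + 1 ∧ p (k + 1) = p k + 1}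

/-- `c_s^- = ⋃_{p ∈ ℙ_s} c_p^-`. -/
def cSegMinus (N : ℕ) (s : ℚ × ℚ) : Set (ℚ × ℚ) :=
  {t | ∃ p, IsMYPath N s p ∧ t ∈ cMinus N p}

/-- `c_s^+ = ⋃_{p ∈ ℙ_s} c_p^+`. -/
def cSegPlus (N : ℕ) (s : ℚ × ℚ) : Set (ℚ × ℚ) :=
  {t | ∃ p, IsMYPath N s p ∧ t ∈ cPlus N p}

/-- `(p 0, …, p (l-1)) ∈ ℙ_𝐬` for the length-`l` tuple `𝐬`. -/
def IsPathTuple (N l : ℕ) (s : ℕ → ℚ × ℚ) (p : ℕ → ℕ → ℤ) : Prop :=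
  (∀ m, m < l → IsMYPath N (s m) (p m)) ∧
  ∀ m n, m < n → n < l → ∀ k, k ≤ N + 1 → p m k < p n k

/-- The highest path `p_s(k) = spar(s) + |k - supp(s)|` (rational-valued formula). -/
def highestPath (s : ℚ × ℚ) (k : ℚ) : ℚ := spar s + |k - supp s|

/-- The lowest path `p_s^*(k) = spar(s) + h - |k - (h - supp(s))|` (rational-valued formula). -/
def lowestPath (N : ℕ) (s : ℚ × ℚ) (k : ℚ) : ℚ :=
  spar s + ((N : ℚ) + 1) - |k - (((N : ℚ) + 1) - supp s)|

/-- `Small N s₁' t` : `spar(t) ≤ spar(*s₁') - |supp(t) - supp(*s₁')|` (integrality order). -/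
def Small (N : ℕ) (s₁' t : ℚ × ℚ) : Prop :=
  zle (spar t) (spar (ldual N s₁') - |supp t - supp (ldual N s₁')|)

/-- `(s₁, s₂)` and `(s₁', s₂')` are ladders and `(s₁, s₂) ▷₁ (s₁', s₂')`. -/
def Pair1Cover (N : ℕ) (s₁ s₁' s₂ s₂' : ℚ × ℚ) : Prop :=
  IsLadder2 N s₁ s₂ ∧ IsLadder2 N s₁' s₂' ∧
  Covers N s₁ s₁' ∧ Covers N s₂ s₂' ∧ Covers N s₁ s₂'

section IntegralityOrder

variable {a b c : ℚ}

lemma zle_iff_exists_nat : zle a b ↔ ∃ k : ℕ, b = a + k := by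
  constructor
  · rintro ⟨n, hn, hab⟩
    lift n to ℕ using hn
    exact ⟨n, by push_cast at hab; linarith⟩
  · rintro ⟨k, rfl⟩
    exact ⟨k, by lia, by push_cast; ring⟩

lemma zlt_iff_zle_add_one : zlt a b ↔ zle (a + 1) b := by
  constructor
  · exact fun ⟨n, hn, hab⟩ => ⟨n - 1, by lia, by push_cast; linarith⟩
  · exact fun ⟨n, hn, hab⟩ => ⟨n + 1, by lia, by push_cast; linarith⟩

lemma zlt_iff_exists_nat : zlt a b ↔ ∃ k : ℕ, b = a + 1 + k := by
  rw [zlt_iff_zle_add_one, zle_iff_exists_nat]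

lemma zle_add_natCast_iff (a : ℚ) (k n : ℕ) : zle (a + k) (a + n) ↔ k ≤ n := by
  simp only [zle_iff_exists_nat, add_assoc, add_right_inj, le_iff_exists_add]
  norm_cast

lemma zlt_add_natCast_iff (a : ℚ) (k n : ℕ) : zlt (a + k) (a + n) ↔ k < n := by
  rw [zlt_iff_zle_add_one, add_assoc, ← Nat.cast_add_one, zle_add_natCast_iff, Nat.succ_le_iff]

lemma zlt.zle : zlt a b → zle a b := fun ⟨n, hn, h⟩ => ⟨n, hn.le, h⟩

lemma zle.trans : zle a b → zle b c → zle a c := fun ⟨m, hm, hab⟩ ⟨n, hn, hbc⟩ =>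
  ⟨m + n, by lia, by push_cast; linarith⟩

lemma zlt.trans : zlt a b → zlt b c → zlt a c := fun ⟨m, hm, hab⟩ ⟨n, hn, hbc⟩ =>
  ⟨m + n, by lia, by push_cast; linarith⟩

lemma zle.add_left (h : zle a b) (c : ℚ) : zle (c + a) (c + b) := by
  simpa only [zle, add_sub_add_left_eq_sub] using h

end IntegralityOrder

section Segments

/-- `x` is an integer or a half-integer, as required of the endpoints of a segment. -/
def IsHalfInt (x : ℚ) : Prop := ∃ m : ℤ, 2 * x = m

lemma isHalfInt_iff_of_zlt {a b : ℚ} : zlt a b → (IsHalfInt a ↔ IsHalfInt b) := by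
  rintro ⟨n, -, hab⟩
  constructor
  · exact fun ⟨m, hm⟩ => ⟨m + 2 * n, by push_cast; linarith⟩
  · exact fun ⟨m, hm⟩ => ⟨m - 2 * n, by push_cast; linarith⟩

variable {N : ℕ} {s t s₁ s₁' s₂ s₂' : ℚ × ℚ}

lemma isSeg_iff :
    IsSeg N s ↔ IsHalfInt s.1 ∧ zle s.1 s.2 ∧ zle s.2 ((N : ℚ) + 1 + s.1) := by
  refine and_congr_right fun _ => ⟨?_, ?_⟩
  · rintro ⟨n, hn, hn0, hnN⟩
    have hnN' : n ≤ N + 1 := by exact_mod_cast hnN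
    exact ⟨⟨n, hn0, hn⟩, N + 1 - n, by lia, by push_cast; linarith⟩
  · rintro ⟨⟨n, hn0, hn⟩, m, hm0, hm⟩
    have hm0' : (0 : ℚ) ≤ m := by exact_mod_cast hm0
    exact ⟨n, hn, hn0, by linarith⟩

lemma Covers.isSeg_left (h : Covers N s t) (hs : IsHalfInt s.1) : IsSeg N s := by
  obtain ⟨hi, hij, hj, hji⟩ := h
  exact isSeg_iff.2 ⟨hs, hij.trans hj.zle, hji.trans (hi.zle.add_left _)⟩

lemma Covers.isSeg_right (h : Covers N s t) (ht : IsHalfInt t.1) : IsSeg N t := by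
  obtain ⟨hi, hij, hj, hji⟩ := h
  exact isSeg_iff.2 ⟨ht, hi.zle.trans hij, hj.zle.trans hji⟩

lemma pair1Cover_iff (hs₁ : IsHalfInt s₁.1) (hcov : Covers N s₁ s₁') :
    Pair1Cover N s₁ s₁' s₂ s₂' ↔
      (zlt s₁'.1 s₂'.1 ∧ zlt s₂'.1 s₁.1 ∧ zlt s₁.2 s₂.2 ∧ zle s₂.2 ((N : ℚ) + 1 + s₂'.1)) ∧
      (zlt s₁'.2 s₂'.2 ∧ zlt s₂'.2 s₁.2 ∧ zlt s₁.1 s₂.1 ∧ zle s₂.1 s₂'.2) := by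
  constructor
  · rintro ⟨⟨-, -, hi, hj⟩, ⟨-, -, hi', hj'⟩, -, ⟨-, hij, -, hji⟩, ⟨hii, -, hjj, -⟩⟩
    exact ⟨⟨hi', hii, hj, hji⟩, hj', hjj, hi, hij⟩
  · rintro ⟨⟨hi', hii, hj, hji⟩, hj', hjj, hi, hij⟩
    have hcov₂ : Covers N s₂ s₂' := ⟨hii.trans hi, hij, hjj.trans hj, hji⟩
    have hcov₁₂ : Covers N s₁ s₂' := ⟨hii, hi.zle.trans hij, hjj, hj.zle.trans hji⟩
    have hs₁' : IsHalfInt s₁'.1 := (isHalfInt_iff_of_zlt hcov.1).2 hs₁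
    have hs₂ : IsHalfInt s₂.1 := (isHalfInt_iff_of_zlt hi).1 hs₁
    have hs₂' : IsHalfInt s₂'.1 := (isHalfInt_iff_of_zlt hii).2 hs₁
    exact ⟨⟨hcov.isSeg_left hs₁, hcov₂.isSeg_left hs₂, hi, hj⟩,
      ⟨hcov.isSeg_right hs₁', hcov₂.isSeg_right hs₂', hi', hj'⟩, hcov, hcov₂, hcov₁₂⟩

end Segments

section Trapezoid

variable {a b c d : ℚ}

/-- The lattice points `(x, y)` with `a < x < b` and `c < y ≤ d + x`; the orders `zlt` and `zle`
tie `x` to the class of `a` modulo `ℤ`, and `y` to that of `c`. -/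
def trapezoid (a b c d : ℚ) : Set (ℚ × ℚ) :=
  {p | zlt a p.1 ∧ zlt p.1 b ∧ zlt c p.2 ∧ zle p.2 (d + p.1)}

/-- The index set of a trapezoid: `n` columns, of which the `k`-th, from `k = 0` on, has
`e + k + 1` elements. -/
def staircase (n e : ℕ) : Finset (Σ _ : ℕ, ℕ) :=
  (Finset.range n).sigma fun k => Finset.range (e + k + 1)

lemma card_staircase (n e : ℕ) : ((staircase n e).card : ℚ) = n * (2 * e + n + 1) / 2 := by
  simp only [staircase, Finset.card_sigma, Finset.card_range]
  induction n with
  | zero => simp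
  | succ n ih =>
    rw [Finset.sum_range_succ, Nat.cast_add, ih]
    push_cast
    ring

/-- The lattice point `(a + 1 + k, c + 1 + l)`, where `(a + 1, c + 1)` is the lowest point of the
first column of a trapezoid. -/
def latticePoint (a c : ℚ) (p : Σ _ : ℕ, ℕ) : ℚ × ℚ := (a + 1 + p.1, c + 1 + p.2)

lemma latticePoint_injective (a c : ℚ) : Function.Injective (latticePoint a c) := by
  rintro ⟨k, l⟩ ⟨k', l'⟩ h
  simpa [latticePoint] using h

lemma trapezoid_eq_image_staircase {n e : ℕ} (hb : b = a + 1 + n) (hd : d + a = c + e) :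
    trapezoid a b c d = latticePoint a c '' staircase n e := by
  have mem_iff (k l : ℕ) : (zlt (a + 1 + k) b ∧ zle (c + 1 + l) (d + (a + 1 + k))) ↔
      ⟨k, l⟩ ∈ staircase n e := by
    have htop : d + (a + 1 + k) = c + 1 + (e + k : ℕ) := by push_cast; linarith
    rw [hb, htop, zlt_add_natCast_iff, zle_add_natCast_iff]
    simp only [staircase, Finset.mem_sigma, Finset.mem_range, Nat.lt_succ_iff]
  ext ⟨x, y⟩
  constructor
  · rintro ⟨hax, hxb, hcy, hyx⟩
    obtain ⟨k, rfl⟩ := zlt_iff_exists_nat.1 hax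
    obtain ⟨l, rfl⟩ := zlt_iff_exists_nat.1 hcy
    exact ⟨⟨k, l⟩, (mem_iff k l).1 ⟨hxb, hyx⟩, rfl⟩
  · rintro ⟨⟨k, l⟩, hkl, ⟨⟩⟩
    obtain ⟨hxb, hyx⟩ := (mem_iff k l).2 hkl
    exact ⟨zlt_iff_exists_nat.2 ⟨k, rfl⟩, hxb, zlt_iff_exists_nat.2 ⟨l, rfl⟩, hyx⟩

lemma finite_trapezoid (hab : zlt a b) (hcd : zle c (d + a)) : (trapezoid a b c d).Finite := by
  obtain ⟨n, hn⟩ := zlt_iff_exists_nat.1 hab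
  obtain ⟨e, he⟩ := zle_iff_exists_nat.1 hcd
  rw [trapezoid_eq_image_staircase hn he]
  exact (Finset.finite_toSet _).image _

lemma ncard_trapezoid (hab : zlt a b) (hcd : zle c (d + a)) :
    ((trapezoid a b c d).ncard : ℚ) = (b - a - 1) * (2 * (d - c) + a + b) / 2 := by
  obtain ⟨n, hn⟩ := zlt_iff_exists_nat.1 hab
  obtain ⟨e, he⟩ := zle_iff_exists_nat.1 hcd
  rw [trapezoid_eq_image_staircase hn he,
    Set.ncard_image_of_injective _ (latticePoint_injective a c), Set.ncard_coe_finset,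
    card_staircase, hn, show (e : ℚ) = d + a - c by linarith]
  ring

end Trapezoid

/-- Regroups the coordinates of `([x, y], [u, v])` as `((u, y), (v, x))`, the two pairs on which
the covering conditions are independent. -/
def crossEquiv : (ℚ × ℚ) × (ℚ × ℚ) ≃ (ℚ × ℚ) × (ℚ × ℚ) where
  toFun q := ((q.2.1, q.1.2), (q.2.2, q.1.1))
  invFun r := ((r.2.2, r.1.2), (r.1.1, r.2.1))

lemma setOf_pair1Cover_eq_preimage {N : ℕ} {s₁ s₁' : ℚ × ℚ} (hs₁ : IsHalfInt s₁.1)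
    (hcov : Covers N s₁ s₁') :
    {q : (ℚ × ℚ) × (ℚ × ℚ) | Pair1Cover N s₁ s₁' q.1 q.2} =
      crossEquiv ⁻¹' (trapezoid s₁'.1 s₁.1 s₁.2 (N + 1) ×ˢ trapezoid s₁'.2 s₁.2 s₁.1 0) := by
  ext q
  simp only [Set.mem_ofPred_eq, pair1Cover_iff hs₁ hcov, trapezoid, crossEquiv, Set.mem_preimage,
    Equiv.coe_fn_mk, Set.mem_prod, zero_add]

/-- The number of pairs `(s₂, s₂')` making `(s₁, s₂)` and `(s₁', s₂')` ladders with
`(s₁, s₂) ▷₁ (s₁', s₂')` equals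
`(1/4)(i₁−i₁'−1)(j₁−j₁'−1)(2h+i₁+i₁'−2j₁)(j₁+j₁'−2i₁)`. -/
theorem one_cover_count (N : ℕ) (hN : 1 ≤ N) (s₁ s₁' : ℚ × ℚ)
    (h₁ : IsProperSeg N s₁) (h₁' : IsProperSeg N s₁') (hcov : Covers N s₁ s₁') :
    Set.Finite {q : (ℚ × ℚ) × (ℚ × ℚ) | Pair1Cover N s₁ s₁' q.1 q.2} ∧
    (Set.ncard {q : (ℚ × ℚ) × (ℚ × ℚ) | Pair1Cover N s₁ s₁' q.1 q.2} : ℚ) =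
      (1 / 4) * (s₁.1 - s₁'.1 - 1) * (s₁.2 - s₁'.2 - 1) *
        (2 * ((N : ℚ) + 1) + s₁.1 + s₁'.1 - 2 * s₁.2) *
        (s₁.2 + s₁'.2 - 2 * s₁.1) := by
  rw [setOf_pair1Cover_eq_preimage h₁.1 hcov]
  obtain ⟨hi, hij, hj, hji⟩ := hcov
  have hij₀ : zle s₁.1 (0 + s₁'.2) := by rwa [zero_add]
  constructor
  · exact ((finite_trapezoid hi hji).prod (finite_trapezoid hj hij₀)).preimage
      crossEquiv.injective.injOn
  · rw [Set.ncard_preimage_of_injective_subset_range crossEquiv.injective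
      (by simp only [crossEquiv.range_eq_univ, Set.subset_univ]), Set.ncard_prod, Nat.cast_mul,
      ncard_trapezoid hi hji, ncard_trapezoid hj hij₀]
    ring

end SnakePaper
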